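/- Let H : ℝ × (ℝ^d × ℝ^d) → ℝ be a smooth Hamiltonian, 1-periodic in time, with a smooth flow φ satisfying the cocycle identity φ(t+1,z) = φ(t,φ(1,z)), and let ψ = φ(1,·). Let x₀ and y₀ be fixed points of ψ whose 1-periodic orbits x(t) = φ(t,x₀), y(t) = φ(t,y₀), t ∈ [0,1], satisfy c := 𝒜_H(y) − 𝒜_H(x) > 0, and let σ : [0,1] → ℝ^d × ℝ^d be a C¹ curve with σ(0) = x₀ and σ(1) = y₀. Assume in addition that there is R > 0 such that ‖p(ψⁿ(σ(t)))‖ ≤ R for all n ≥ 0 and all t ∈ [0,1], where p denotes the second component. Then there exist a > 0 and b ≥ 0 such that for every n ≥ 1 the length of ψⁿ∘σ satisfies ∫₀¹ ‖(ψⁿ∘σ)'(t)‖ dt ≥ a·n − b. -/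

import Mathlib

open intervalIntegral

/-- The Liouville line integral `I(c) = ∫₀¹ ⟨p(t), q'(t)⟩ dt` of a curve
`c(t) = (q(t), p(t))` in `ℝ^d × ℝ^d`. -/
noncomputable def liouvilleIntegral (d : ℕ)
    (c : ℝ → EuclideanSpace ℝ (Fin d) × EuclideanSpace ℝ (Fin d)) : ℝ :=
  ∫ t in (0:ℝ)..1, @inner ℝ _ _ ((c t).2) (deriv (fun s => (c s).1) t)

/-- The Hamiltonian vector field `X_H(t,(q,p)) = (∂_p H(t,q,p), −∂_q H(t,q,p))`. -/
noncomputable def hamVectorField (d : ℕ)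
    (H : ℝ × (EuclideanSpace ℝ (Fin d) × EuclideanSpace ℝ (Fin d)) → ℝ) (t : ℝ)
    (z : EuclideanSpace ℝ (Fin d) × EuclideanSpace ℝ (Fin d)) :
    EuclideanSpace ℝ (Fin d) × EuclideanSpace ℝ (Fin d) :=
  (gradient (fun p => H (t, (z.1, p))) z.2, - gradient (fun q => H (t, (q, z.2))) z.1)

/-- The symplectic action `𝒜_H(γ) = I(γ) − ∫₀¹ H(t,γ(t)) dt` of a curve `γ`. -/
noncomputable def symplecticAction (d : ℕ)
    (H : ℝ × (EuclideanSpace ℝ (Fin d) × EuclideanSpace ℝ (Fin d)) → ℝ)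
    (γ : ℝ → EuclideanSpace ℝ (Fin d) × EuclideanSpace ℝ (Fin d)) : ℝ :=
  liouvilleIntegral d γ - ∫ t in (0:ℝ)..1, H (t, γ t)

section helpers

lemma two_le : (1 : WithTop ℕ∞) + 1 ≤ ((⊤ : ℕ∞) : WithTop ℕ∞) := by
  have : ((2 : ℕ∞) : WithTop ℕ∞) ≤ ((⊤ : ℕ∞) : WithTop ℕ∞) := WithTop.coe_le_coe.2 le_top
  rw [one_add_one_eq_two]
  exact this

lemma two_le2 : (2 : WithTop ℕ∞) ≤ ((⊤ : ℕ∞) : WithTop ℕ∞) := by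
  rw [← one_add_one_eq_two]
  exact two_le

variable {E : Type*} [NormedAddCommGroup E] [InnerProductSpace ℝ E]

/-- Lagrangian density along the flow. -/
noncomputable def lagr (H : ℝ × (E × E) → ℝ) (φ : ℝ × (E × E) → E × E) (x : ℝ × (E × E)) : ℝ :=
  @inner ℝ _ _ (φ x).2 (fderiv ℝ φ x (1, 0)).1 - H (x.1, φ x)

lemma lagr_contDiff (H : ℝ × (E × E) → ℝ) (φ : ℝ × (E × E) → E × E)
    (hH : ContDiff ℝ (⊤ : ℕ∞) H) (hφ : ContDiff ℝ (⊤ : ℕ∞) φ) :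
    ContDiff ℝ 1 (lagr H φ) := by
  have h1 : ContDiff ℝ 1 φ := hφ.of_le (by exact_mod_cast le_top)
  have h2 : ContDiff ℝ 1 (fderiv ℝ φ) := hφ.fderiv_right two_le
  have h3 : ContDiff ℝ 1 H := hH.of_le (by exact_mod_cast le_top)
  unfold lagr
  exact (h1.snd.inner ℝ ((h2.clm_apply contDiff_const).fst)).sub
    (h3.comp (contDiff_fst.prodMk h1))

lemma lagr_fderiv (H : ℝ × (E × E) → ℝ) (φ : ℝ × (E × E) → E × E)
    (hH : ContDiff ℝ (⊤ : ℕ∞) H) (hφ : ContDiff ℝ (⊤ : ℕ∞) φ)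
    (hX : ∀ t z, ∀ w : E × E, fderiv ℝ H (t, φ (t, z)) (0, w) =
      @inner ℝ _ _ (fderiv ℝ φ (t, z) (1, 0)).1 w.2 - @inner ℝ _ _ (fderiv ℝ φ (t, z) (1, 0)).2 w.1)
    (t : ℝ) (z v : E × E) :
    HasDerivAt (fun t => @inner ℝ _ _ (φ (t, z)).2 (fderiv ℝ φ (t, z) (0, v)).1)
      (fderiv ℝ (lagr H φ) (t, z) (0, v)) t := by
  have d1 : Differentiable ℝ φ := hφ.differentiable (by simp)
  have h2 : ContDiff ℝ 1 (fderiv ℝ φ) := hφ.fderiv_right two_le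
  have d2 : Differentiable ℝ (fderiv ℝ φ) := h2.differentiable (by simp)
  have dH : Differentiable ℝ H := hH.differentiable (by simp)
  have hsymm : fderiv ℝ (fderiv ℝ φ) (t, z) (1, 0) (0, v)
      = fderiv ℝ (fderiv ℝ φ) (t, z) (0, v) (1, 0) := by
    have : IsSymmSndFDerivAt ℝ φ (t, z) := by
      apply (hφ.contDiffAt).isSymmSndFDerivAt
      simpa using two_le2
    exact this.eq _ _
  have hφ' := (d1 (t, z)).hasFDerivAt
  have hφ'' := (d2 (t, z)).hasFDerivAt
  have hLd : HasFDerivAt (lagr H φ) _ (t, z) :=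
    ((hφ'.snd).inner ℝ ((hφ''.clm_apply (hasFDerivAt_const ((1 : ℝ), (0 : E × E)) (t, z))).fst)).sub
      ((dH (t, φ (t, z))).hasFDerivAt.comp (t, z) (hasFDerivAt_fst.prodMk hφ'))
  have hline : HasDerivAt (fun t : ℝ => (t, z)) ((1 : ℝ), (0 : E × E)) t :=
    (hasDerivAt_id t).prodMk (hasDerivAt_const t z)
  have hg := ((hφ'.snd).inner ℝ
    ((hφ''.clm_apply (hasFDerivAt_const ((0 : ℝ), v) (t, z))).fst)).comp_hasDerivAt t hline
  refine hg.congr_deriv ?_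
  rw [hLd.fderiv]
  have := hX t z (fderiv ℝ φ (t, z) (0, v))
  simp [fderivInnerCLM_apply, hsymm, this]
  rw [real_inner_comm (fderiv ℝ φ (t, z) (1, 0)).1]
  ring

lemma key (H : ℝ × (E × E) → ℝ) (φ : ℝ × (E × E) → E × E)
    (hH : ContDiff ℝ (⊤ : ℕ∞) H) (hφ : ContDiff ℝ (⊤ : ℕ∞) φ)
    (hφ0 : ∀ z, φ (0, z) = z)
    (hX : ∀ t z, ∀ w : E × E, fderiv ℝ H (t, φ (t, z)) (0, w) =
      @inner ℝ _ _ (fderiv ℝ φ (t, z) (1, 0)).1 w.2 - @inner ℝ _ _ (fderiv ℝ φ (t, z) (1, 0)).2 w.1)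
    (c : ℝ → E × E) (hc : ContDiff ℝ 1 c) :
    (∫ s in (0:ℝ)..1, @inner ℝ _ _ (φ (1, c s)).2 (deriv (fun s => (φ (1, c s)).1) s))
      - (∫ s in (0:ℝ)..1, @inner ℝ _ _ (c s).2 (deriv (fun s => (c s).1) s))
    = (∫ t in (0:ℝ)..1, lagr H φ (t, c 1)) - ∫ t in (0:ℝ)..1, lagr H φ (t, c 0) := by
  have hL := lagr_contDiff H φ hH hφ
  have d1 : Differentiable ℝ φ := hφ.differentiable (by simp)
  have cfd : Continuous (fderiv ℝ φ) := hφ.continuous_fderiv (by simp)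
  have cL : Continuous (fderiv ℝ (lagr H φ)) := hL.continuous_fderiv (by simp)
  have hcd : Differentiable ℝ c := hc.differentiable (by simp)
  have cc : Continuous c := hc.continuous
  have cdc : Continuous (deriv c) := hc.continuous_deriv (by simp)
  have cφ : Continuous φ := hφ.continuous
  have hpath : ∀ t s, HasDerivAt (fun s => (t, c s)) ((0 : ℝ), deriv c s) s := fun t s =>
    (hasDerivAt_const s t).prodMk (hcd s).hasDerivAt
  have hderiv : ∀ t s, deriv (fun s => (φ (t, c s)).1) s
      = (fderiv ℝ φ (t, c s) (0, deriv c s)).1 := fun t s => by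
    have := ((d1 (t, c s)).hasFDerivAt.fst).comp_hasDerivAt s (hpath t s)
    exact this.deriv
  have hG : Continuous (fun x : ℝ × ℝ => fderiv ℝ (lagr H φ) (x.1, c x.2) (0, deriv c x.2)) := by
    fun_prop
  have hcont : ∀ t : ℝ, Continuous (fun s : ℝ =>
      @inner ℝ _ _ (φ (t, c s)).2 (fderiv ℝ φ (t, c s) (0, deriv c s)).1) := fun t => by
    fun_prop
  have h0 : (∫ s in (0:ℝ)..1, @inner ℝ _ _ (c s).2 (deriv (fun s => (c s).1) s))
      = ∫ s in (0:ℝ)..1, @inner ℝ _ _ (φ (0, c s)).2 (fderiv ℝ φ (0, c s) (0, deriv c s)).1 := by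
    simp_rw [← hderiv, hφ0]
  rw [h0]
  simp_rw [hderiv]
  rw [← intervalIntegral.integral_sub ((hcont 1).intervalIntegrable _ _)
    ((hcont 0).intervalIntegrable _ _)]
  have cLL := hL.continuous
  rw [← intervalIntegral.integral_sub
    ((by fun_prop : Continuous fun t => lagr H φ (t, c 1)).intervalIntegrable _ _)
    ((by fun_prop : Continuous fun t => lagr H φ (t, c 0)).intervalIntegrable _ _)]
  have e1 : ∀ s : ℝ, @inner ℝ _ _ (φ (1, c s)).2 (fderiv ℝ φ (1, c s) (0, deriv c s)).1
      - @inner ℝ _ _ (φ (0, c s)).2 (fderiv ℝ φ (0, c s) (0, deriv c s)).1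
      = ∫ t in (0:ℝ)..1, fderiv ℝ (lagr H φ) (t, c s) (0, deriv c s) := fun s => by
    rw [integral_eq_sub_of_hasDerivAt
      (fun t _ => lagr_fderiv H φ hH hφ hX t (c s) (deriv c s))]
    exact (by fun_prop : Continuous fun t : ℝ =>
      fderiv ℝ (lagr H φ) (t, c s) (0, deriv c s)).intervalIntegrable _ _
  have e2 : ∀ t : ℝ, lagr H φ (t, c 1) - lagr H φ (t, c 0)
      = ∫ s in (0:ℝ)..1, fderiv ℝ (lagr H φ) (t, c s) (0, deriv c s) := fun t => by
    have hd : ∀ s, HasDerivAt (fun s => lagr H φ (t, c s))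
        (fderiv ℝ (lagr H φ) (t, c s) (0, deriv c s)) s := fun s => by
      have h := ((hL.differentiable (by simp)) (t, c s)).hasFDerivAt
      have h' := h.comp_hasDerivAt s (hpath t s)
      exact h'
    rw [integral_eq_sub_of_hasDerivAt (fun s _ => hd s)]
    exact (by fun_prop : Continuous fun s : ℝ =>
      fderiv ℝ (lagr H φ) (t, c s) (0, deriv c s)).intervalIntegrable _ _
  simp_rw [e1, e2]
  have hsw := MeasureTheory.intervalIntegral_integral_swap (a := 0) (b := 1)
    (μ := MeasureTheory.volume.restrict (Set.Ioc (0:ℝ) 1))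
    (f := fun t s => fderiv ℝ (lagr H φ) (t, c s) (0, deriv c s)) (by
      rw [MeasureTheory.Measure.prod_restrict]
      have hK : IsCompact (Set.Icc (0:ℝ) 1 ×ˢ Set.Icc (0:ℝ) 1) := isCompact_Icc.prod isCompact_Icc
      have hI := hG.continuousOn.integrableOn_compact (μ := MeasureTheory.volume) hK
      refine MeasureTheory.IntegrableOn.mono_set hI ?_
      rw [Set.uIoc_of_le zero_le_one]
      exact Set.prod_mono Set.Ioc_subset_Icc_self Set.Ioc_subset_Icc_self)
  simp_rw [← intervalIntegral.integral_of_le (zero_le_one (α := ℝ))] at hsw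
  exact hsw.symm

end helpers

/-- Linear growth of the length of `ψⁿ∘σ` when the `p`-components of all the iterated curves
stay bounded by `R`, for `σ` joining two fixed points of the time-1 map `ψ` whose
1-periodic orbits have positive action difference. -/
theorem stmt_7 (d : ℕ)
    (H : ℝ × (EuclideanSpace ℝ (Fin d) × EuclideanSpace ℝ (Fin d)) → ℝ)
    (φ : ℝ × (EuclideanSpace ℝ (Fin d) × EuclideanSpace ℝ (Fin d)) →
      EuclideanSpace ℝ (Fin d) × EuclideanSpace ℝ (Fin d))
    (hH : ContDiff ℝ (⊤ : ℕ∞) H) (hφ : ContDiff ℝ (⊤ : ℕ∞) φ)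
    (hHper : ∀ t z, H (t + 1, z) = H (t, z))
    (hφ0 : ∀ z, φ (0, z) = z)
    (hφflow : ∀ t z, deriv (fun s => φ (s, z)) t = hamVectorField d H t (φ (t, z)))
    (hcocycle : ∀ t z, φ (t + 1, z) = φ (t, φ (1, z)))
    (x₀ y₀ : EuclideanSpace ℝ (Fin d) × EuclideanSpace ℝ (Fin d))
    (hx₀ : φ (1, x₀) = x₀) (hy₀ : φ (1, y₀) = y₀)
    (hgap : 0 < symplecticAction d H (fun t => φ (t, y₀)) -
      symplecticAction d H (fun t => φ (t, x₀)))
    (σ : ℝ → EuclideanSpace ℝ (Fin d) × EuclideanSpace ℝ (Fin d)) (hσ : ContDiff ℝ 1 σ)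
    (hσ0 : σ 0 = x₀) (hσ1 : σ 1 = y₀)
    (R : ℝ) (hR : 0 < R)
    (hbound : ∀ n : ℕ, ∀ t ∈ Set.Icc (0:ℝ) 1, ‖((fun z => φ (1, z))^[n] (σ t)).2‖ ≤ R) :
    ∃ a > (0:ℝ), ∃ b ≥ (0:ℝ), ∀ n : ℕ, 1 ≤ n →
      a * n - b ≤ ∫ t in (0:ℝ)..1, ‖deriv ((fun z => φ (1, z))^[n] ∘ σ) t‖ := by
  set ψ := fun z => φ (1, z) with hψ
  have hψc : ContDiff ℝ 1 ψ := (hφ.of_le (by exact_mod_cast le_top)).comp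
    (contDiff_const.prodMk contDiff_id)
  have d1 : Differentiable ℝ φ := hφ.differentiable (by simp)
  have dH : Differentiable ℝ H := hH.differentiable (by simp)
  have hφt : ∀ t z, HasDerivAt (fun s => φ (s, z)) (fderiv ℝ φ (t, z) (1, 0)) t := fun t z =>
    (d1 (t, z)).hasFDerivAt.comp_hasDerivAt t ((hasDerivAt_id t).prodMk (hasDerivAt_const t z))
  have hX : ∀ t z, ∀ w, fderiv ℝ H (t, φ (t, z)) (0, w) =
      @inner ℝ _ _ (fderiv ℝ φ (t, z) (1, 0)).1 w.2
        - @inner ℝ _ _ (fderiv ℝ φ (t, z) (1, 0)).2 w.1 := by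
    intro t z w
    rw [← (hφt t z).deriv, hφflow]
    obtain ⟨q, p⟩ := φ (t, z)
    have hp : HasFDerivAt (fun p' => H (t, (q, p'))) _ p :=
      (dH (t, (q, p))).hasFDerivAt.comp p ((hasFDerivAt_const t p).prodMk
        ((hasFDerivAt_const q p).prodMk (hasFDerivAt_id p)))
    have hq : HasFDerivAt (fun q' => H (t, (q', p))) _ q :=
      (dH (t, (q, p))).hasFDerivAt.comp q ((hasFDerivAt_const t q).prodMk
        ((hasFDerivAt_id q).prodMk (hasFDerivAt_const p q)))
    simp only [hamVectorField, gradient, inner_neg_left, InnerProductSpace.toDual_symm_apply,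
      hp.fderiv, hq.fderiv]
    simp [← map_add]
  have hact : ∀ z, symplecticAction d H (fun t => φ (t, z))
      = ∫ t in (0:ℝ)..1, lagr H φ (t, z) := by
    intro z
    have cfd : Continuous (fderiv ℝ φ) := hφ.continuous_fderiv (by simp)
    have cφ := hφ.continuous
    have cH := hH.continuous
    have e : ∀ t, deriv (fun s => (φ (s, z)).1) t = (fderiv ℝ φ (t, z) (1, 0)).1 :=
      fun t => by
        have h := (hasFDerivAt_fst (𝕜 := ℝ) (p := φ (t, z))).comp_hasDerivAt t (hφt t z)
        exact h.deriv
    simp only [symplecticAction, liouvilleIntegral, e, lagr]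
    rw [intervalIntegral.integral_sub]
    · exact Continuous.intervalIntegrable (by fun_prop) _ _
    · exact Continuous.intervalIntegrable (by fun_prop) _ _
  set A := symplecticAction d H (fun t => φ (t, y₀)) -
      symplecticAction d H (fun t => φ (t, x₀)) with hA
  have hit : ∀ n : ℕ, ContDiff ℝ 1 (ψ^[n] ∘ σ) ∧ (ψ^[n] ∘ σ) 0 = x₀ ∧ (ψ^[n] ∘ σ) 1 = y₀ ∧
      liouvilleIntegral d (ψ^[n] ∘ σ) = liouvilleIntegral d σ + n * A := by
    intro n
    induction n with
    | zero => simp [hσ, hσ0, hσ1]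
    | succ n ih =>
      obtain ⟨h1, h2, h3, h4⟩ := ih
      rw [Function.iterate_succ', Function.comp_assoc]
      refine ⟨hψc.comp h1, ?_, ?_, ?_⟩
      · rw [Function.comp_apply, h2]; exact hx₀
      · rw [Function.comp_apply, h3]; exact hy₀
      · have := key H φ hH hφ hφ0 hX _ h1
        rw [h2, h3, ← hact, ← hact, ← hA] at this
        have e : liouvilleIntegral d (ψ ∘ (ψ^[n] ∘ σ)) - liouvilleIntegral d (ψ^[n] ∘ σ) = A :=
          this
        push_cast
        linarith
  refine ⟨A / R, div_pos hgap hR, |liouvilleIntegral d σ| / R, by positivity, ?_⟩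
  intro n _
  obtain ⟨h1, -, -, h4⟩ := hit n
  have hcd : Differentiable ℝ (ψ^[n] ∘ σ) := h1.differentiable (by simp)
  have cc : Continuous (ψ^[n] ∘ σ) := h1.continuous
  have cdc : Continuous (deriv (ψ^[n] ∘ σ)) := h1.continuous_deriv (by simp)
  have hle : liouvilleIntegral d (ψ^[n] ∘ σ)
      ≤ ∫ t in (0:ℝ)..1, R * ‖deriv (ψ^[n] ∘ σ) t‖ := by
    have e : ∀ t, deriv (fun s => ((ψ^[n] ∘ σ) s).1) t = (deriv (ψ^[n] ∘ σ) t).1 :=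
      fun t => by
        have h := (hasFDerivAt_fst (𝕜 := ℝ) (p := (ψ^[n] ∘ σ) t)).comp_hasDerivAt t
          (hcd t).hasDerivAt
        exact h.deriv
    simp only [liouvilleIntegral, e]
    apply intervalIntegral.integral_mono_on zero_le_one
    · exact Continuous.intervalIntegrable (by fun_prop) _ _
    · exact Continuous.intervalIntegrable (by fun_prop) _ _
    · intro t ht
      exact (real_inner_le_norm _ _).trans
        (mul_le_mul (hbound n t ht) (norm_fst_le _) (norm_nonneg _) hR.le)
  rw [intervalIntegral.integral_const_mul, h4] at hle
  have h5 := neg_abs_le (liouvilleIntegral d σ)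
  rw [div_mul_eq_mul_div, ← sub_div, div_le_iff₀ hR]
  linarith
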